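/- arXiv:2503.06240 — 2 statements merged into one kernel-verified Lean document; each statement's English description precedes it below -/
import Mathlib

section
/- (Jing's generalization of Specht's criterion.) Let (A₁,…,A_k) and (B₁,…,B_k) be two k-tuples of real m×n matrices. Then there exist orthogonal matrices O ∈ O(m) and P ∈ O(n) such that Bᵢ = O Aᵢ P for all i = 1,…,k, if and only if Tr(w{Aᵢᵗ Aⱼ : 1 ≤ i, j ≤ k}) = Tr(w{Bᵢᵗ Bⱼ : 1 ≤ i, j ≤ k}) for every word w in the k² noncommuting variables indexed by pairs (i,j). -/
open Matrix

/-!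
Write `X (i, j) = Aᵢᵀ Aⱼ` and `Y (i, j) = Bᵢᵀ Bⱼ`. If `Bᵢ = O Aᵢ P`, then `Y s = Pᵀ (X s) P`, so the
traces of words agree. The converse has two parts.

*Specht's theorem for families closed under transposition* (`exists_orthogonal_intertwiner`):
if all words in `X` and `Y` have equal traces, some orthogonal `U` satisfies `U (X s) = (Y s) U`.
Among the partial isometries `U` that intertwine `X` and `Y`, take one with minimal kernel, and let
`p = 1 - Uᵀ U` and `q = 1 - U Uᵀ`. These projections commute with `X` and `Y` respectively, and
the words still satisfy `tr (p X_w) = tr (q Y_w)`. If `p ≠ 0`, there is a nonzero intertwiner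
`T = q T p` (`exists_intertwiner`); the partial isometry in its polar decomposition
(`exists_partial_isometry`), added to `U`, gives an intertwining partial isometry with a strictly
smaller kernel, a contradiction. Hence `Uᵀ U = 1`.

To find `T`, let `G` be the span of the pairs `(p X_w, q Y_w)`. It is stable under left
multiplication by every `(X s, Y s)`, a family closed under adjoints, so the orthogonal projection
onto `G` commutes with these multiplications. The equality of traces says that the two components
of an element of `G` have the same Frobenius norm; therefore the off-diagonal block `F` of the
projection does not kill `p`. Evaluating `F` on rank one matrices `v aᵀ` and applying the result
to a vector `b` gives the intertwiners `v ↦ F (v aᵀ) b`, and not all of them vanish on the range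
of `p`.

*Gram matrices*: `(Aᵢ Uᵀ)ᵀ (Aⱼ Uᵀ) = Bᵢᵀ Bⱼ` says that the columns of all the `Aᵢ Uᵀ` and those of
all the `Bᵢ` have the same Gram matrix, so an orthogonal `O` carries the former to the latter
(`exists_orthogonal_of_gram_eq`).
-/

/-! ### Linear algebra over the reals -/

/-- Orthogonal projection onto a subspace with respect to a positive definite form `β`. -/
theorem exists_orthogonal_proj {V : Type*} [AddCommGroup V] [Module ℝ V] [FiniteDimensional ℝ V]
    (β : V →ₗ[ℝ] V →ₗ[ℝ] ℝ) (hsymm : ∀ u v, β u v = β v u)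
    (hnonneg : ∀ u, 0 ≤ β u u) (hdef : ∀ u, β u u = 0 → u = 0) (G : Submodule ℝ V) :
    ∃ Ψ : V →ₗ[ℝ] V, (∀ u, Ψ u ∈ G) ∧ ∀ u, ∀ g ∈ G, β (u - Ψ u) g = 0 := by
  let c : InnerProductSpace.Core ℝ V :=
    { inner := fun u v => β u v
      conj_inner_symm := fun u v => by simpa using hsymm v u
      re_inner_nonneg := fun u => by simpa using hnonneg u
      add_left := fun u v w => by simp
      smul_left := fun u v r => by simp
      definite := hdef }
  let _ : NormedAddCommGroup V := c.toNormedAddCommGroup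
  let _ : InnerProductSpace ℝ V := InnerProductSpace.ofCore c.toCore
  exact ⟨G.starProjection.toLinearMap, fun u => G.starProjection_apply_mem u,
    fun u g hg => G.starProjection_inner_eq_zero u g hg⟩

theorem trace_transpose_mul_self_nonneg_real {n : ℕ} (M : Matrix (Fin n) (Fin n) ℝ) :
    0 ≤ (Mᵀ * M).trace := by
  simpa using (posSemidef_conjTranspose_mul_self M).trace_nonneg

theorem eq_zero_of_trace_transpose_mul_self {n : ℕ} {M : Matrix (Fin n) (Fin n) ℝ} (h : (Mᵀ * M).trace = 0) :
    M = 0 := by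
  rw [← conjTranspose_eq_transpose_of_trivial] at h
  exact trace_conjTranspose_mul_self_eq_zero_iff.1 h

/-- Two families of vectors in `ℝᵐ` (the columns of `A` and `B`) with the same Gram matrix differ by
an orthogonal transformation: `A c ↦ B c` is an isometry on the range of `A`, and it extends. -/
theorem exists_orthogonal_of_gram_eq {m : ℕ} {κ : Type*} [Fintype κ] [DecidableEq κ]
    (A B : Matrix (Fin m) κ ℝ) (h : Aᵀ * A = Bᵀ * B) :
    ∃ O : Matrix (Fin m) (Fin m) ℝ, O * Oᵀ = 1 ∧ B = O * A := by
  let E := EuclideanSpace ℝ (Fin m)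
  let e := (WithLp.linearEquiv 2 ℝ (Fin m → ℝ)).symm
  let LA : (κ → ℝ) →ₗ[ℝ] E := e.toLinearMap ∘ₗ A.mulVecLin
  let LB : (κ → ℝ) →ₗ[ℝ] E := e.toLinearMap ∘ₗ B.mulVecLin
  have key (M : Matrix (Fin m) κ ℝ) (c : κ → ℝ) :
      ‖e (M *ᵥ c)‖ ^ 2 = c ⬝ᵥ ((Mᵀ * M) *ᵥ c) := by
    rw [EuclideanSpace.real_norm_sq_eq, ← mulVec_mulVec, dotProduct_mulVec, vecMul_transpose]
    simp [e, dotProduct, sq]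
  have hnorm (c : κ → ℝ) : ‖LB c‖ = ‖LA c‖ := by
    have : ‖LB c‖ ^ 2 = ‖LA c‖ ^ 2 := by
      change ‖e (B *ᵥ c)‖ ^ 2 = ‖e (A *ᵥ c)‖ ^ 2
      rw [key, key, h]
    exact (sq_eq_sq₀ (norm_nonneg _) (norm_nonneg _)).1 this
  -- The isometry on the range of `A` is `B ∘ r` for a linear section `r` of `A`; by `hnorm` it does
  -- not depend on the section.
  obtain ⟨r, hr⟩ := LA.rangeRestrict.exists_rightInverse_of_surjective LA.range_rangeRestrict
  have hr' (x : LinearMap.range LA) : LA (r x) = x := by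
    have := congrArg Subtype.val (LinearMap.congr_fun hr x)
    simpa using this
  let L : LinearMap.range LA →ₗᵢ[ℝ] E :=
    { toLinearMap := LB ∘ₗ r
      norm_map' := fun x => by
        rw [LinearMap.comp_apply, hnorm, hr', Submodule.coe_norm] }
  have hL (c : κ → ℝ) : L.extend (LA c) = LB c := by
    have h1 : L.extend (LA c) = LB (r ⟨LA c, c, rfl⟩) := L.extend_apply ⟨LA c, c, rfl⟩
    rw [h1, ← sub_eq_zero, ← map_sub, ← norm_eq_zero, hnorm, map_sub, hr', sub_self, norm_zero]
  let O : Matrix (Fin m) (Fin m) ℝ :=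
    LinearMap.toMatrix' (e.symm.toLinearMap ∘ₗ L.extend.toLinearMap ∘ₗ e.toLinearMap)
  have hO (v : Fin m → ℝ) : e (O *ᵥ v) = L.extend (e v) := by
    simp only [O, LinearMap.toMatrix'_mulVec]
    simp
  have hin (v w : Fin m → ℝ) : inner ℝ (e v) (e w) = v ⬝ᵥ w := by
    simp [e, PiLp.inner_apply, dotProduct, mul_comm]
  refine ⟨O, ?_, ?_⟩
  · rw [mul_eq_one_comm]
    ext i j
    have h2 := L.extend.inner_map_map (e (Pi.single i 1)) (e (Pi.single j 1))
    rw [← hO, ← hO, hin, hin, dotProduct_comm, dotProduct_mulVec, ← mulVec_transpose,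
      mulVec_mulVec] at h2
    simpa [one_apply, Pi.single_apply, eq_comm] using h2
  · apply Matrix.mulVec_injective
    funext c
    apply e.injective
    change LB c = e ((O * A) *ᵥ c)
    rw [← mulVec_mulVec, hO]
    exact (hL c).symm

/-- The partial isometry `T S` of the polar decomposition of `T`, where `S` is the pseudoinverse of
`(Tᵀ T)^(1/2)`; as a function of `Tᵀ T`, the matrix `S` commutes with all that `Tᵀ T` commutes
with. -/
theorem exists_partial_isometry {n : ℕ} (T : Matrix (Fin n) (Fin n) ℝ) (hT : T ≠ 0) :
    ∃ S : Matrix (Fin n) (Fin n) ℝ, (∀ C, Commute (Tᵀ * T) C → Commute S C) ∧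
      T * S ≠ 0 ∧ T * S * (T * S)ᵀ * (T * S) = T * S := by
  have hpsd : (Tᵀ * T).PosSemidef := by
    simpa using posSemidef_conjTranspose_mul_self T
  set H := Tᵀ * T with hH
  have hsa : IsSelfAdjoint H := hpsd.isHermitian
  have hcont (f : ℝ → ℝ) : ContinuousOn f (spectrum ℝ H) :=
    (Matrix.finite_real_spectrum (A := H)).continuousOn f
  have hnn : ∀ x ∈ spectrum ℝ H, 0 ≤ x := by
    open scoped MatrixOrder in
    exact fun x hx => spectrum_nonneg_of_nonneg hpsd.nonneg hx
  -- At `x = 0` the value is `0`, which makes `cfc f H` a pseudoinverse.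
  let f : ℝ → ℝ := fun x => (√x)⁻¹
  have hS : (cfc f H)ᵀ = cfc f H := by
    have : IsSelfAdjoint (cfc f H) := cfc_predicate f H
    rw [← conjTranspose_eq_transpose_of_trivial]
    exact this
  have hid : cfc (fun x : ℝ => x) H = H := cfc_id' ℝ H
  refine ⟨cfc f H, fun C hC => hC.cfc_real f, fun h0 => hT ?_, ?_⟩
  · have h1 : H * cfc f H * cfc (fun x => √x) H = H := by
      suffices cfc (fun x : ℝ => x) H * cfc f H * cfc (fun x => √x) H = cfc (fun x : ℝ => x) H by
        rwa [hid] at this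
      rw [← cfc_mul _ _ _ (hcont _) (hcont _), ← cfc_mul _ _ _ (hcont _) (hcont _)]
      refine cfc_congr fun x hx => ?_
      rcases (hnn x hx).eq_or_lt with h | h
      · simp [← h]
      · have := (Real.sqrt_pos.2 h).ne'
        simp only [f]
        field_simp
    rw [hH, Matrix.mul_assoc Tᵀ, h0] at h1
    apply eq_zero_of_trace_transpose_mul_self
    rw [← h1]; simp
  · rw [transpose_mul, hS]
    have h1 : cfc f H * cfc f H * H * cfc f H = cfc f H := by
      have : cfc f H * cfc f H * cfc (fun x : ℝ => x) H * cfc f H = cfc f H := by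
        rw [← cfc_mul _ _ _ (hcont _) (hcont _), ← cfc_mul _ _ _ (hcont _) (hcont _),
          ← cfc_mul _ _ _ (hcont _) (hcont _)]
        refine cfc_congr fun x hx => ?_
        rcases (hnn x hx).eq_or_lt with h | h
        · simp [← h, f]
        · have h2 := (Real.sqrt_pos.2 h).ne'
          have h3 := Real.sq_sqrt h.le
          simp only [f]
          field_simp
          linarith
      rwa [hid] at this
    conv_rhs => rw [← h1]
    rw [hH]
    simp only [Matrix.mul_assoc]

/-! ### Intertwiners of two families closed under transposition -/

section Intertwiners

variable {n : ℕ} {S : Type*} {σ : S → S} {X Y : S → Matrix (Fin n) (Fin n) ℝ}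

theorem word_transpose (hX : ∀ s, (X s)ᵀ = X (σ s)) (w : List S) :
    ((w.map X).prod)ᵀ = ((w.map σ).reverse.map X).prod := by
  rw [transpose_list_prod, List.map_map, List.map_reverse, List.map_map]
  congr 3
  funext s
  exact hX s

/-- The Frobenius inner products of the corner words `p X_w` are themselves traces of corner
words. -/
theorem word_corner_inner (hX : ∀ s, (X s)ᵀ = X (σ s)) {p : Matrix (Fin n) (Fin n) ℝ}
    (hpt : pᵀ = p) (hpp : p * p = p) (v w : List S) :
    ((p * (v.map X).prod)ᵀ * (p * (w.map X).prod)).trace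
      = (p * ((w ++ (v.map σ).reverse).map X).prod).trace := by
  rw [transpose_mul, hpt, word_transpose hX, List.map_append, List.prod_append, trace_mul_comm,
    ← Matrix.mul_assoc, Matrix.trace_mul_comm, ← Matrix.mul_assoc, ← Matrix.mul_assoc, hpp,
    Matrix.mul_assoc]

/-- The Frobenius inner product on pairs of matrices. -/
noncomputable def pairForm (n : ℕ) :
    (Matrix (Fin n) (Fin n) ℝ × Matrix (Fin n) (Fin n) ℝ) →ₗ[ℝ]
      (Matrix (Fin n) (Fin n) ℝ × Matrix (Fin n) (Fin n) ℝ) →ₗ[ℝ] ℝ :=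
  LinearMap.mk₂ ℝ (fun u v => (u.1ᵀ * v.1).trace + (u.2ᵀ * v.2).trace)
    (fun u u' v => by simp [Matrix.add_mul]; ring)
    (fun c u v => by simp; ring)
    (fun u v v' => by simp [Matrix.mul_add]; ring)
    (fun c u v => by simp; ring)

theorem pairForm_apply (u v : Matrix (Fin n) (Fin n) ℝ × Matrix (Fin n) (Fin n) ℝ) :
    pairForm n u v = (u.1ᵀ * v.1).trace + (u.2ᵀ * v.2).trace := rfl

theorem pairForm_symm (u v : Matrix (Fin n) (Fin n) ℝ × Matrix (Fin n) (Fin n) ℝ) :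
    pairForm n u v = pairForm n v u := by
  rw [pairForm_apply, pairForm_apply, ← trace_transpose (u.1ᵀ * v.1),
    ← trace_transpose (u.2ᵀ * v.2)]
  simp

theorem pairForm_nonneg (u : Matrix (Fin n) (Fin n) ℝ × Matrix (Fin n) (Fin n) ℝ) :
    0 ≤ pairForm n u u :=
  add_nonneg (trace_transpose_mul_self_nonneg_real _) (trace_transpose_mul_self_nonneg_real _)

theorem pairForm_definite (u : Matrix (Fin n) (Fin n) ℝ × Matrix (Fin n) (Fin n) ℝ)
    (h : pairForm n u u = 0) : u = 0 := by
  have h1 := trace_transpose_mul_self_nonneg_real u.1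
  have h2 := trace_transpose_mul_self_nonneg_real u.2
  rw [pairForm_apply] at h
  exact Prod.ext (eq_zero_of_trace_transpose_mul_self (by linarith)) (eq_zero_of_trace_transpose_mul_self (by linarith))

/-- If the corners cut out by the projections `p` and `q` have equal traces on all words, and
`p ≠ 0`, then there is a nonzero intertwiner between these corners. -/
theorem exists_intertwiner (hX : ∀ s, (X s)ᵀ = X (σ s)) (hY : ∀ s, (Y s)ᵀ = Y (σ s))
    {p q : Matrix (Fin n) (Fin n) ℝ} (hpt : pᵀ = p) (hpp : p * p = p)
    (hpX : ∀ s, Commute p (X s)) (hqt : qᵀ = q) (hqq : q * q = q) (hqY : ∀ s, Commute q (Y s))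
    (htr : ∀ w : List S, (p * (w.map X).prod).trace = (q * (w.map Y).prod).trace)
    (hp : p ≠ 0) :
    ∃ T : Matrix (Fin n) (Fin n) ℝ, T ≠ 0 ∧ (∀ s, T * X s = Y s * T) ∧ T * p = T ∧ q * T = T := by
  let xw : List S → Matrix (Fin n) (Fin n) ℝ × Matrix (Fin n) (Fin n) ℝ :=
    fun w => (p * (w.map X).prod, q * (w.map Y).prod)
  let G := Submodule.span ℝ (Set.range xw)
  obtain ⟨Ψ, hΨG, hΨ⟩ := exists_orthogonal_proj (pairForm n) pairForm_symm pairForm_nonneg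
    pairForm_definite G
  have hGq : ∀ g ∈ G, q * g.2 = g.2 := by
    intro g hg
    induction hg using Submodule.span_induction with
    | mem g hg =>
      obtain ⟨w, rfl⟩ := hg
      simp only [xw]
      rw [← Matrix.mul_assoc, hqq]
    | zero => simp
    | add a b _ _ ha hb => simp [Matrix.mul_add, ha, hb]
    | smul c a _ ha => simp [ha]
  have hGZ : ∀ s, ∀ g ∈ G, (X s * g.1, Y s * g.2) ∈ G := by
    intro s g hg
    induction hg using Submodule.span_induction with
    | mem g hg =>
      obtain ⟨w, rfl⟩ := hg
      refine Submodule.subset_span ⟨s :: w, ?_⟩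
      simp only [xw, List.map_cons, List.prod_cons]
      rw [← Matrix.mul_assoc, ← Matrix.mul_assoc, ← Matrix.mul_assoc, ← Matrix.mul_assoc,
        (hpX s).eq, (hqY s).eq]
    | zero =>
      simp only [Prod.fst_zero, Prod.snd_zero, Matrix.mul_zero]
      exact G.zero_mem
    | add a b _ _ ha hb => simpa [Matrix.mul_add] using G.add_mem ha hb
    | smul c a _ ha => simpa using G.smul_mem c ha
  -- Both components of elements of `G` have the same inner products.
  have hGn : ∀ g ∈ G, ∀ h ∈ G, (g.1ᵀ * h.1).trace = (g.2ᵀ * h.2).trace := by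
    intro g hg h hh
    induction hg, hh using Submodule.span_induction₂ with
    | mem_mem g h hg hh =>
      obtain ⟨v, rfl⟩ := hg
      obtain ⟨w, rfl⟩ := hh
      simp only [xw]
      rw [word_corner_inner hX hpt hpp, word_corner_inner hY hqt hqq, htr]
    | zero_left => simp
    | zero_right => simp
    | add_left a b c _ _ _ ha hb => simp [Matrix.add_mul, ha, hb]
    | add_right a b c _ _ _ ha hb => simp [Matrix.mul_add, ha, hb]
    | smul_left r a b _ _ ha => simp [ha]
    | smul_right r a b _ _ ha => simp [ha]
  have hadj : ∀ s (u v : Matrix (Fin n) (Fin n) ℝ × Matrix (Fin n) (Fin n) ℝ),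
      pairForm n (X s * u.1, Y s * u.2) v = pairForm n u (X (σ s) * v.1, Y (σ s) * v.2) := by
    intro s u v
    simp only [pairForm_apply, transpose_mul, hX, hY, Matrix.mul_assoc]
  have hΨZ : ∀ s u, Ψ (X s * u.1, Y s * u.2) = (X s * (Ψ u).1, Y s * (Ψ u).2) := by
    intro s u
    rw [← sub_eq_zero]
    have hmem := G.sub_mem (hΨG (X s * u.1, Y s * u.2)) (hGZ s _ (hΨG u))
    apply pairForm_definite
    generalize hd : Ψ (X s * u.1, Y s * u.2) - (X s * (Ψ u).1, Y s * (Ψ u).2) = d at hmem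
    have h1 := hΨ (X s * u.1, Y s * u.2) d hmem
    have h2 := hΨ u _ (hGZ (σ s) d hmem)
    rw [← hadj] at h2
    have h3 : d = (X s * (u - Ψ u).1, Y s * (u - Ψ u).2)
        - ((X s * u.1, Y s * u.2) - Ψ (X s * u.1, Y s * u.2)) := by
      rw [← hd]
      ext <;> simp [Matrix.mul_sub]
    -- Only the first argument of the form is expanded; both halves are orthogonal to `d ∈ G`.
    conv_lhs => enter [1]; rw [h3]
    rw [map_sub, LinearMap.sub_apply, h1, h2, sub_zero]
  -- The off-diagonal block of the projection onto `G`.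
  let F : Matrix (Fin n) (Fin n) ℝ →ₗ[ℝ] Matrix (Fin n) (Fin n) ℝ :=
    LinearMap.snd ℝ _ _ ∘ₗ Ψ ∘ₗ LinearMap.inl ℝ _ _
  have hFX : ∀ s M, F (X s * M) = Y s * F M := by
    intro s M
    have := congrArg Prod.snd (hΨZ s (M, 0))
    simpa [F] using this
  have hFq : ∀ M, q * F M = F M := fun M => hGq _ (hΨG _)
  have hFp : F p ≠ 0 := by
    intro h0
    have hb : (Ψ (p, 0)).2 = 0 := h0
    have ha := hGn _ (hΨG (p, 0)) _ (hΨG (p, 0))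
    rw [hb] at ha
    have ha' : (Ψ (p, 0)).1 = 0 := eq_zero_of_trace_transpose_mul_self (by simpa using ha)
    have hz : Ψ (p, 0) = 0 := Prod.ext ha' hb
    have h1 := hΨ (p, 0) (xw []) (Submodule.subset_span ⟨[], rfl⟩)
    rw [hz, sub_zero, pairForm_apply] at h1
    exact hp (eq_zero_of_trace_transpose_mul_self (by simpa [xw] using h1))
  -- `T a b` is the matrix of `v ↦ F (v aᵀ) b`.
  let T : (Fin n → ℝ) → (Fin n → ℝ) → Matrix (Fin n) (Fin n) ℝ := fun a b =>
    LinearMap.toMatrix'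
      { toFun := fun v => F (vecMulVec v a) *ᵥ b
        map_add' := fun v w => by rw [add_vecMulVec, map_add, add_mulVec]
        map_smul' := fun c v => by simp [smul_vecMulVec, smul_mulVec] }
  have hT : ∀ a b v, T a b *ᵥ v = F (vecMulVec v a) *ᵥ b := by
    intro a b v
    simp only [T, LinearMap.toMatrix'_mulVec]
    rfl
  have hTX : ∀ a b s, T a b * X s = Y s * T a b := by
    intro a b s
    apply Matrix.mulVec_injective
    funext v
    rw [← mulVec_mulVec, ← mulVec_mulVec, hT, hT, ← mul_vecMulVec, hFX, mulVec_mulVec]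
  have hTq : ∀ a b, q * T a b = T a b := by
    intro a b
    apply Matrix.mulVec_injective
    funext v
    rw [← mulVec_mulVec, hT, mulVec_mulVec, hFq]
  obtain ⟨a, b, hab⟩ : ∃ a b, T a b * p ≠ 0 := by
    by_contra! hall
    have h1 : ∀ a v, F (p * vecMulVec v a) = 0 := by
      intro a v
      apply Matrix.mulVec_injective
      funext b
      rw [mul_vecMulVec, ← hT, mulVec_mulVec, hall]
      simp
    apply hFp
    have h2 : p = ∑ i, p * vecMulVec (Pi.single i 1) (Pi.single i 1) := by
      rw [← Finset.mul_sum]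
      conv_lhs => rw [← Matrix.mul_one p]
      congr 1
      ext i j
      simp [Matrix.sum_apply, vecMulVec_apply, Pi.single_apply, one_apply]
    rw [h2, map_sum]
    exact Finset.sum_eq_zero fun i _ => h1 _ _
  refine ⟨T a b * p, hab, fun s => ?_, ?_, ?_⟩
  · rw [Matrix.mul_assoc, (hpX s).eq, ← Matrix.mul_assoc, hTX, Matrix.mul_assoc]
  · rw [Matrix.mul_assoc, hpp]
  · rw [← Matrix.mul_assoc, hTq]

/-- Specht's theorem for real families closed under transposition. -/
theorem exists_orthogonal_intertwiner (hX : ∀ s, (X s)ᵀ = X (σ s)) (hY : ∀ s, (Y s)ᵀ = Y (σ s))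
    (htr : ∀ w : List S, ((w.map X).prod).trace = ((w.map Y).prod).trace) :
    ∃ U : Matrix (Fin n) (Fin n) ℝ, Uᵀ * U = 1 ∧ ∀ s, U * X s = Y s * U := by
  -- The intertwining partial isometries.
  let good : Set (Matrix (Fin n) (Fin n) ℝ) :=
    {U | U * Uᵀ * U = U ∧ ∀ s, U * X s = Y s * U}
  have hadj : ∀ {U : Matrix (Fin n) (Fin n) ℝ}, (∀ s, U * X s = Y s * U) →
      ∀ s, X s * Uᵀ = Uᵀ * Y s := by
    intro U hU s
    have hXX : (X (σ s))ᵀ = X s := by rw [← hX, transpose_transpose]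
    have hYY : (Y (σ s))ᵀ = Y s := by rw [← hY, transpose_transpose]
    have := congrArg transpose (hU (σ s))
    rwa [transpose_mul, transpose_mul, hXX, hYY] at this
  obtain ⟨_, ⟨U, hU, rfl⟩, hmin⟩ := IsArtinian.set_has_minimal (R := ℝ)
    (Set.image (fun U : Matrix (Fin n) (Fin n) ℝ => LinearMap.ker U.mulVecLin) good)
    ⟨_, 0, ⟨by simp, by simp⟩, rfl⟩
  obtain ⟨hUU, hUX⟩ := hU
  have hXU := hadj hUX
  have hUU' : Uᵀ * U * Uᵀ = Uᵀ := by
    have := congrArg transpose hUU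
    simpa [Matrix.mul_assoc] using this
  refine ⟨U, ?_, hUX⟩
  by_contra hne
  set p := 1 - Uᵀ * U with hp
  set q := 1 - U * Uᵀ with hq
  have hUp : U * p = 0 := by rw [hp, Matrix.mul_sub, ← Matrix.mul_assoc, hUU]; simp
  have hUq : Uᵀ * q = 0 := by rw [hq, Matrix.mul_sub, ← Matrix.mul_assoc, hUU']; simp
  have hpp : p * p = p := by
    conv_lhs => enter [1]; rw [hp]
    rw [Matrix.sub_mul, Matrix.mul_assoc, hUp]; simp
  have hqq : q * q = q := by
    conv_lhs => enter [1]; rw [hq]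
    rw [Matrix.sub_mul, Matrix.mul_assoc, hUq]; simp
  have hpX : ∀ s, Commute p (X s) := fun s => by
    refine (Commute.one_left _).sub_left ?_
    change Uᵀ * U * X s = X s * (Uᵀ * U)
    rw [Matrix.mul_assoc, hUX, ← Matrix.mul_assoc, ← hXU, Matrix.mul_assoc]
  have hqY : ∀ s, Commute q (Y s) := fun s => by
    refine (Commute.one_left _).sub_left ?_
    change U * Uᵀ * Y s = Y s * (U * Uᵀ)
    rw [Matrix.mul_assoc, ← hXU, ← Matrix.mul_assoc, hUX, Matrix.mul_assoc]
  have hUw : ∀ w : List S, U * (w.map X).prod = (w.map Y).prod * U := by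
    intro w
    induction w with
    | nil => simp
    | cons s w ih =>
      rw [List.map_cons, List.prod_cons, List.map_cons, List.prod_cons, ← Matrix.mul_assoc, hUX,
        Matrix.mul_assoc, ih, Matrix.mul_assoc]
  have htr' : ∀ w : List S, (p * (w.map X).prod).trace = (q * (w.map Y).prod).trace := by
    intro w
    rw [hp, hq, Matrix.sub_mul, Matrix.sub_mul, trace_sub, trace_sub, Matrix.one_mul,
      Matrix.one_mul, htr, Matrix.mul_assoc, hUw, Matrix.trace_mul_comm, Matrix.mul_assoc,
      Matrix.trace_mul_comm (List.prod _)]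
  obtain ⟨T, hT0, hTX, hTp, hqT⟩ := exists_intertwiner hX hY (p := p) (q := q)
    (by simp [hp]) hpp hpX (by simp [hq]) hqq hqY htr' (fun h => hne (sub_eq_zero.1 h).symm)
  obtain ⟨R, hR, hR0, hRR⟩ := exists_partial_isometry T hT0
  have hTt : p * Tᵀ = Tᵀ := by
    have := congrArg transpose hTp
    simpa [transpose_mul, hp] using this
  have hRX : ∀ s, R * X s = X s * R := fun s => hR _ (by
    change Tᵀ * T * X s = X s * (Tᵀ * T)
    rw [Matrix.mul_assoc, hTX, ← Matrix.mul_assoc, ← hadj hTX, Matrix.mul_assoc])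
  have hRp : R * p = p * R := hR _ (by
    change Tᵀ * T * p = p * (Tᵀ * T)
    rw [Matrix.mul_assoc, hTp, ← Matrix.mul_assoc, hTt])
  set V := T * R with hV
  have hVX : ∀ s, V * X s = Y s * V := fun s => by
    rw [hV, Matrix.mul_assoc, hRX, ← Matrix.mul_assoc, hTX, Matrix.mul_assoc]
  have hVp : V * p = V := by
    rw [hV, Matrix.mul_assoc, hRp, ← Matrix.mul_assoc, hTp]
  have hqV : q * V = V := by rw [hV, ← Matrix.mul_assoc, hqT]
  have hUV : Uᵀ * V = 0 := by rw [← hqV, ← Matrix.mul_assoc, hUq, Matrix.zero_mul]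
  have hVU : V * Uᵀ = 0 := by
    have hpU : p * Uᵀ = 0 := by
      have := congrArg transpose hUp
      simpa [transpose_mul, hp] using this
    rw [← hVp, Matrix.mul_assoc, hpU, Matrix.mul_zero]
  have hVU' : Vᵀ * U = 0 := by
    have := congrArg transpose hUV
    simpa [transpose_mul] using this
  have hUV' : U * Vᵀ = 0 := by
    have := congrArg transpose hVU
    simpa [transpose_mul] using this
  refine hmin _ ⟨U + V, ⟨?_, fun s => ?_⟩, rfl⟩ ?_
  · have h1 : (U + V) * (U + V)ᵀ = U * Uᵀ + V * Vᵀ := by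
      rw [transpose_add, Matrix.mul_add, Matrix.add_mul, Matrix.add_mul, hVU, hUV', add_zero,
        zero_add]
    rw [h1, Matrix.add_mul, Matrix.mul_add, Matrix.mul_add, hUU, hRR, Matrix.mul_assoc U, hUV,
      Matrix.mul_assoc V, hVU']
    simp
  · rw [Matrix.add_mul, Matrix.mul_add, hUX, hVX]
  · refine SetLike.lt_iff_le_and_exists.2 ⟨fun x hx => ?_, ?_⟩
    · rw [LinearMap.mem_ker, mulVecLin_apply] at hx ⊢
      have h1 : (U * Uᵀ * (U + V)) *ᵥ x = 0 := by rw [← mulVec_mulVec, hx, mulVec_zero]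
      rwa [Matrix.mul_add, hUU, Matrix.mul_assoc, hUV, Matrix.mul_zero, add_zero] at h1
    · by_contra! hall
      apply hR0
      apply Matrix.mulVec_injective
      funext x
      have h1 := hall (p *ᵥ x) (by
        rw [LinearMap.mem_ker, mulVecLin_apply, mulVec_mulVec, hUp, zero_mulVec])
      rw [LinearMap.mem_ker, mulVecLin_apply, mulVec_mulVec, Matrix.add_mul, hUp, hVp,
        zero_add] at h1
      rw [h1, zero_mulVec]

end Intertwiners

/-! ### The criterion -/

/-- Jing's generalization of Specht's criterion: two `k`-tuples of real `m×n`
matrices satisfy `Bᵢ = O Aᵢ P` for orthogonal `O, P` iff all trace identities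
`Tr(w{AᵢᵗAⱼ}) = Tr(w{BᵢᵗBⱼ})` hold, for words `w` in the `k²` noncommuting
variables indexed by pairs `(i,j)`. -/
theorem jing_specht_criterion
    (m n k : ℕ)
    (A B : Fin k → Matrix (Fin m) (Fin n) ℝ) :
    (∃ (O : Matrix (Fin m) (Fin m) ℝ) (P : Matrix (Fin n) (Fin n) ℝ),
        O * Oᵀ = 1 ∧ P * Pᵀ = 1 ∧ ∀ i, B i = O * A i * P) ↔
    (∀ w : List (Fin k × Fin k), w ≠ [] →
        ((w.map fun s => (A s.1)ᵀ * A s.2).prod).trace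
          = ((w.map fun s => (B s.1)ᵀ * B s.2).prod).trace) := by
  constructor
  · rintro ⟨O, P, hO, hP, hB⟩ w -
    have hO' : Oᵀ * O = 1 := mul_eq_one_comm.1 hO
    have hBB : ∀ i j, (B i)ᵀ * B j = Pᵀ * ((A i)ᵀ * A j) * P := by
      intro i j
      rw [hB, hB]
      calc (O * A i * P)ᵀ * (O * A j * P) = Pᵀ * ((A i)ᵀ * ((Oᵀ * O) * A j)) * P := by
            simp only [transpose_mul, Matrix.mul_assoc]
        _ = _ := by rw [hO', Matrix.one_mul]
    have hw : (w.map fun s => (B s.1)ᵀ * B s.2).prod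
        = Pᵀ * (w.map fun s => (A s.1)ᵀ * A s.2).prod * P := by
      induction w with
      | nil => simp [mul_eq_one_comm.1 hP]
      | cons s w ih =>
        rw [List.map_cons, List.prod_cons, ih, hBB, List.map_cons, List.prod_cons]
        generalize (List.map (fun s => (A s.1)ᵀ * A s.2) w).prod = N
        calc Pᵀ * ((A s.1)ᵀ * A s.2) * P * (Pᵀ * N * P)
            = Pᵀ * (((A s.1)ᵀ * A s.2) * ((P * Pᵀ) * (N * P))) := by
              simp only [Matrix.mul_assoc]
          _ = _ := by rw [hP, Matrix.one_mul]; simp only [Matrix.mul_assoc]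
    rw [hw, Matrix.trace_mul_comm, ← Matrix.mul_assoc, hP, Matrix.one_mul]
  · intro h
    obtain ⟨U, hU, hUX⟩ := exists_orthogonal_intertwiner (S := Fin k × Fin k) (σ := Prod.swap)
      (X := fun s => (A s.1)ᵀ * A s.2) (Y := fun s => (B s.1)ᵀ * B s.2)
      (fun s => by simp [transpose_mul]) (fun s => by simp [transpose_mul])
      (fun w => by
        rcases eq_or_ne w [] with rfl | hw
        · simp
        · exact h w hw)
    have hU' : U * Uᵀ = 1 := mul_eq_one_comm.1 hU
    obtain ⟨O, hO, hOB⟩ := exists_orthogonal_of_gram_eq (κ := Fin k × Fin n)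
      (Matrix.of fun r c => (A c.1 * Uᵀ) r c.2) (Matrix.of fun r c => B c.1 r c.2) (by
        ext c d
        have h1 : (A c.1 * Uᵀ)ᵀ * (A d.1 * Uᵀ) = (B c.1)ᵀ * B d.1 := by
          have h2 := hUX (c.1, d.1)
          simp only at h2
          rw [transpose_mul, transpose_transpose, Matrix.mul_assoc, ← Matrix.mul_assoc (A c.1)ᵀ,
            ← Matrix.mul_assoc, h2, Matrix.mul_assoc, hU', Matrix.mul_one]
        exact congrFun (congrFun h1 c.2) d.2)
    refine ⟨O, Uᵀ, hO, by rw [transpose_transpose, hU], fun i => ?_⟩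
    ext r c
    rw [Matrix.mul_assoc]
    exact congrFun (congrFun hOB r) (i, c)
end

section
/- (Specht's criterion, real version.) Let A and B be real n×n matrices. Then there exists an orthogonal matrix O ∈ O(n) with B = Oᵗ A O if and only if Tr(w(A, Aᵗ)) = Tr(w(B, Bᵗ)) for every word w(x,y) in two noncommuting variables, i.e. for every nonempty finite sequence ε₁,…,ε_L ∈ {1,2}, Tr(C_{ε₁}⋯C_{ε_L}) = Tr(D_{ε₁}⋯D_{ε_L}) where C₁ = A, C₂ = Aᵗ, D₁ = B, D₂ = Bᵗ. -/
/-!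
The direct implication is conjugation invariance of the trace. For the converse, `A` and `B`
define two representations `ρ`, `σ` of the free algebra on two letters on Euclidean space, by
`x ↦ A, y ↦ Aᵀ` and `x ↦ B, y ↦ Bᵀ`. Both are compatible with adjoints, and their characters agree.
Such representations are isometrically equivalent (`exists_isometric_intertwiner`), by induction on
the dimension:

* Equal characters force `ker ρ = ker σ`, because `Tr (ρ (a* a))` is the squared Hilbert–Schmidt
  norm of `ρ a` (`eq_zero_of_trace_eq`).
* Choose `p` self-adjoint with `ρ p ≠ 0` and `ker (ρ p)` maximal. For self-adjoint `a` some
  `p a p - μ p²` has a strictly larger kernel under `ρ`, hence is zero under `ρ`, and therefore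
  also under `σ` (`exists_minimal_selfAdjoint`).
* Applied to `a* a`, this says that `‖ρ a (ρ p v)‖² = μ ‖ρ p v‖²` and
  `‖σ a (σ p w)‖² = μ ‖σ p w‖²` with the same `μ` depending only on `a`. After normalization,
  `ρ a v' ↦ σ a w'` is a well-defined isometry between cyclic subrepresentations
  (`exists_matching_vectors`, `exists_linearEquiv_range`).
* The characters on the orthogonal complements agree again, so the induction hypothesis applies
  to them, and the two isometries add up to one on the whole space.
-/

open Matrix

open scoped InnerProductSpace

section Intertwiner

variable {R : Type*} [Ring R] [Algebra ℝ R]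
variable {V W : Type} [NormedAddCommGroup V] [InnerProductSpace ℝ V]
  [NormedAddCommGroup W] [InnerProductSpace ℝ W]

/-- `ρ b` is the adjoint of `ρ a`. No involution on `R` is fixed; `AdjointPair ρ a a` says that
`ρ a` is self-adjoint. -/
def AdjointPair (ρ : R →ₐ[ℝ] Module.End ℝ V) (a b : R) : Prop :=
  ∀ x y : V, ⟪ρ a x, y⟫_ℝ = ⟪x, ρ b y⟫_ℝ

theorem AdjointPair.symm {ρ : R →ₐ[ℝ] Module.End ℝ V} {a b : R} (h : AdjointPair ρ a b) :
    AdjointPair ρ b a := fun x y => by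
  rw [real_inner_comm, ← h, real_inner_comm]

theorem AdjointPair.mul {ρ : R →ₐ[ℝ] Module.End ℝ V} {a b c d : R} (h : AdjointPair ρ a b)
    (h' : AdjointPair ρ c d) : AdjointPair ρ (a * c) (d * b) := fun x y => by
  simp [map_mul, h _ _, h' _ _]

/-- `p v` is an eigenvector of the compression of `b` to the range of `p`; the orthogonal
complement of that range is the kernel of `p`, which removes the projection from the equation. -/
theorem exists_compressed_eigenvector [FiniteDimensional ℝ V] (p b : V →ₗ[ℝ] V) (hp : p.IsSymmetric)
    (hb : b.IsSymmetric) (hp0 : p ≠ 0) :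
    ∃ (μ : ℝ) (v : V), p v ≠ 0 ∧ p (b (p v)) = μ • p (p v) := by
  let U := LinearMap.range p
  let c : U →ₗ[ℝ] U := U.orthogonalProjectionOnto.toLinearMap ∘ₗ b ∘ₗ U.subtype
  have hc : c.IsSymmetric := fun x y => by
    have h1 : ⟪c x, y⟫_ℝ = ⟪b x, (y : V)⟫_ℝ :=
      Submodule.inner_orthogonalProjectionOnto_eq_of_mem_right y (b x)
    have h2 : ⟪x, c y⟫_ℝ = ⟪(x : V), b y⟫_ℝ :=
      Submodule.inner_orthogonalProjectionOnto_eq_of_mem_left x (b y)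
    rw [h1, h2, hb]
  have : Nontrivial U := by
    obtain ⟨v, hv⟩ : ∃ v, p v ≠ 0 := by
      by_contra! h
      exact hp0 (LinearMap.ext h)
    exact ⟨⟨⟨p v, v, rfl⟩, 0, fun h => hv (congrArg Subtype.val h)⟩⟩
  obtain ⟨u, hu⟩ := hc.hasEigenvalue_iSup_of_finiteDimensional.exists_hasEigenvector
  generalize (⨆ x : { x : U // x ≠ 0 }, RCLike.re ⟪c x, x⟫_ℝ / ‖(x : U)‖ ^ 2 : ℝ) = μ at hu
  obtain ⟨⟨u, v, rfl⟩, hu⟩ : ∃ u' : U, u' = u := ⟨u, rfl⟩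
  subst hu
  have he := hu.apply_eq_smul
  refine ⟨μ, v, fun h => hu.2 (Subtype.ext h), ?_⟩
  have horth : b (p v) - μ • p v ∈ Uᗮ := by
    have := U.sub_starProjection_mem_orthogonal (b (p v))
    have h2 : U.starProjection (b (p v)) = μ • p v := congrArg Subtype.val he
    rwa [h2] at this
  have : p (b (p v) - μ • p v) = 0 := by
    rw [← inner_self_eq_zero (𝕜 := ℝ), hp, real_inner_comm]
    exact (Submodule.mem_orthogonal _ _).1 horth _ ⟨_, rfl⟩
  rw [map_sub, map_smul, sub_eq_zero] at this
  exact this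

/-- There is a self-adjoint element `p`, nonzero under `ρ`, for which every `p a p` with `a`
self-adjoint is a multiple of `p²` under `ρ`. It plays the role of a minimal projection. -/
theorem exists_minimal_selfAdjoint [FiniteDimensional ℝ V] [Nontrivial V]
    (ρ : R →ₐ[ℝ] Module.End ℝ V) :
    ∃ p : R, AdjointPair ρ p p ∧ ρ p ≠ 0 ∧
      ∀ a, AdjointPair ρ a a → ∃ μ : ℝ, ρ (p * a * p - μ • (p * p)) = 0 := by
  let S : Set (Submodule ℝ V) := {K | ∃ p, AdjointPair ρ p p ∧ ρ p ≠ 0 ∧ K = LinearMap.ker (ρ p)}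
  have hS : S.Nonempty :=
    ⟨_, 1, fun x y => by simp, by rw [map_one]; exact one_ne_zero, rfl⟩
  obtain ⟨K, ⟨p, hp, hp0, rfl⟩, hmax⟩ :=
    (wellFounded_gt (α := Submodule ℝ V)).has_min S hS
  refine ⟨p, hp, hp0, fun a ha => ?_⟩
  obtain ⟨μ, v, hv, hμ⟩ := exists_compressed_eigenvector (ρ p) (ρ a) hp ha hp0
  refine ⟨μ, ?_⟩
  by_contra hne
  have happ : ∀ x, ρ (p * a * p - μ • (p * p)) x = ρ p (ρ a (ρ p x)) - μ • ρ p (ρ p x) :=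
    fun x => by simp
  refine hmax _ ⟨p * a * p - μ • (p * p), fun x y => ?_, hne, rfl⟩ ?_
  · rw [happ, happ, inner_sub_left, inner_sub_right, inner_smul_left, inner_smul_right,
      hp, ha, hp, hp, hp]
    rfl
  · refine lt_of_le_of_ne (fun x hx => ?_) fun h => hv ?_
    · rw [LinearMap.mem_ker] at hx ⊢
      rw [happ, hx]; simp
    · rw [← LinearMap.mem_ker, h, LinearMap.mem_ker, happ, hμ, sub_self]

/-- Representations with equal characters and common adjoints have the same kernel:
`Tr (σ (a* a)) = ∑ ‖σ a eᵢ‖²` over an orthonormal basis. -/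
theorem eq_zero_of_trace_eq [FiniteDimensional ℝ W] {ρ : R →ₐ[ℝ] Module.End ℝ V}
    {σ : R →ₐ[ℝ] Module.End ℝ W}
    (hadj : ∀ a, ∃ b, AdjointPair ρ a b ∧ AdjointPair σ a b)
    (htr : ∀ a, LinearMap.trace ℝ V (ρ a) = LinearMap.trace ℝ W (σ a)) {a : R}
    (ha : ρ a = 0) : σ a = 0 := by
  obtain ⟨b, -, hb⟩ := hadj a
  have h := htr (b * a)
  rw [map_mul, ha, mul_zero, map_zero,
    LinearMap.trace_eq_sum_inner _ (stdOrthonormalBasis ℝ W)] at h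
  have h0 : ∀ x : W, ⟪x, σ (b * a) x⟫_ℝ = ‖σ a x‖ ^ 2 := fun x => by
    rw [map_mul, Module.End.mul_apply, ← hb, real_inner_self_eq_norm_sq]
  simp only [h0] at h
  have h1 := (Finset.sum_eq_zero_iff_of_nonneg (fun i _ => sq_nonneg _)).1 h.symm
  refine (stdOrthonormalBasis ℝ W).toBasis.ext fun i => ?_
  have := h1 i (Finset.mem_univ _)
  simpa using this

/-- The subrepresentation of `ρ` on an invariant subspace. -/
def subrep (ρ : R →ₐ[ℝ] Module.End ℝ V) (U : Submodule ℝ V)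
    (hU : ∀ a, ∀ x ∈ U, ρ a x ∈ U) : R →ₐ[ℝ] Module.End ℝ U :=
  AlgHom.ofLinearMap
    { toFun := fun a => (ρ a).restrict (hU a)
      map_add' := fun a b => by ext; simp
      map_smul' := fun c a => by ext; simp }
    (by ext; simp) (fun a b => by ext; simp)

theorem coe_subrep_apply (ρ : R →ₐ[ℝ] Module.End ℝ V) (U : Submodule ℝ V)
    (hU : ∀ a, ∀ x ∈ U, ρ a x ∈ U) (a : R) (x : U) : (subrep ρ U hU a x : V) = ρ a x := rfl

theorem trace_subrep_add [FiniteDimensional ℝ V] (ρ : R →ₐ[ℝ] Module.End ℝ V)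
    (U : Submodule ℝ V)
    (hU : ∀ a, ∀ x ∈ U, ρ a x ∈ U) (hU' : ∀ a, ∀ x ∈ Uᗮ, ρ a x ∈ Uᗮ) (a : R) :
    LinearMap.trace ℝ V (ρ a) =
      LinearMap.trace ℝ U (subrep ρ U hU a) + LinearMap.trace ℝ Uᗮ (subrep ρ Uᗮ hU' a) := by
  let e := Submodule.prodEquivOfIsCompl U Uᗮ U.isCompl_orthogonal
  rw [← LinearMap.trace_prodMap', ← LinearMap.trace_conj' _ e]
  congr 1
  ext x
  obtain ⟨y, rfl⟩ := e.surjective x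
  simp [LinearEquiv.conj_apply, e, coe_subrep_apply]

theorem orthogonal_invariant {ρ : R →ₐ[ℝ] Module.End ℝ V} (hadj : ∀ a, ∃ b, AdjointPair ρ a b)
    {U : Submodule ℝ V} (hU : ∀ a, ∀ x ∈ U, ρ a x ∈ U) : ∀ a, ∀ x ∈ Uᗮ, ρ a x ∈ Uᗮ := by
  intro a x hx
  obtain ⟨b, hb⟩ := hadj a
  rw [Submodule.mem_orthogonal] at hx ⊢
  intro u hu
  rw [← hb.symm]
  exact hx _ (hU b u hu)

theorem exists_linearEquiv_range {F : R →ₗ[ℝ] V} {G : R →ₗ[ℝ] W} (h : ∀ a, ‖F a‖ = ‖G a‖) :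
    ∃ e : LinearMap.range F ≃ₗ[ℝ] LinearMap.range G,
      ∀ a, e (F.rangeRestrict a) = G.rangeRestrict a := by
  have hker : LinearMap.ker F = LinearMap.ker G := by
    ext a
    rw [LinearMap.mem_ker, LinearMap.mem_ker, ← norm_eq_zero, h, norm_eq_zero]
  refine ⟨F.quotKerEquivRange.symm ≪≫ₗ Submodule.quotEquivOfEq _ _ hker ≪≫ₗ G.quotKerEquivRange,
    fun a => ?_⟩
  have : F.quotKerEquivRange.symm (F.rangeRestrict a) = (LinearMap.ker F).mkQ a := by
    rw [LinearEquiv.symm_apply_eq]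
    rfl
  rw [LinearEquiv.trans_apply, LinearEquiv.trans_apply, this]
  rfl

/-- The vectors are normalizations of `ρ p v` and `σ p w` for `p` as in
`exists_minimal_selfAdjoint`. -/
theorem exists_matching_vectors [FiniteDimensional ℝ V] [FiniteDimensional ℝ W] [Nontrivial V]
    {ρ : R →ₐ[ℝ] Module.End ℝ V} {σ : R →ₐ[ℝ] Module.End ℝ W}
    (hadj : ∀ a, ∃ b, AdjointPair ρ a b ∧ AdjointPair σ a b)
    (htr : ∀ a, LinearMap.trace ℝ V (ρ a) = LinearMap.trace ℝ W (σ a)) :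
    ∃ (v : V) (w : W), v ≠ 0 ∧ ∀ a, ‖ρ a v‖ = ‖σ a w‖ := by
  obtain ⟨p, hp, hp0, hmin⟩ := exists_minimal_selfAdjoint ρ
  -- Self-adjointness of `p` transfers to `σ` since `p - p*` lies in the common kernel.
  have hσp : AdjointPair σ p p := by
    obtain ⟨q, hq, hq'⟩ := hadj p
    have h0 : ρ (p - q) = 0 := by
      rw [map_sub, sub_eq_zero]
      refine LinearMap.ext fun y => ext_inner_left ℝ fun x => ?_
      rw [← hp, ← hq]
    have h1 := eq_zero_of_trace_eq hadj htr h0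
    rw [map_sub, sub_eq_zero] at h1
    intro x y
    rw [hq', h1]
  have hσp0 : σ p ≠ 0 := fun h => hp0 <|
    eq_zero_of_trace_eq (fun a => (hadj a).imp fun b h => h.symm) (fun a => (htr a).symm) h
  obtain ⟨v, hv⟩ : ∃ v, ρ p v ≠ 0 := by
    by_contra! h
    exact hp0 (LinearMap.ext h)
  obtain ⟨w, hw⟩ : ∃ w, σ p w ≠ 0 := by
    by_contra! h
    exact hσp0 (LinearMap.ext h)
  refine ⟨‖ρ p v‖⁻¹ • ρ p v, ‖σ p w‖⁻¹ • σ p w, by simpa using hv, fun a => ?_⟩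
  obtain ⟨b, hb, hb'⟩ := hadj a
  obtain ⟨μ, hμ⟩ := hmin (b * a) (hb.symm.mul hb)
  have hμ' := eq_zero_of_trace_eq hadj htr hμ
  have h1 : ‖ρ a (ρ p v)‖ ^ 2 = μ * ‖ρ p v‖ ^ 2 := by
    have := congrArg (fun T : V →ₗ[ℝ] V => ⟪v, T v⟫_ℝ) hμ
    simp only [map_sub, map_mul, map_smul, LinearMap.sub_apply, Module.End.mul_apply,
      LinearMap.smul_apply, inner_sub_right, inner_smul_right, ← hp v _, ← hb _ _,
      real_inner_self_eq_norm_sq, LinearMap.zero_apply, inner_zero_right] at this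
    linarith
  have h2 : ‖σ a (σ p w)‖ ^ 2 = μ * ‖σ p w‖ ^ 2 := by
    have := congrArg (fun T : W →ₗ[ℝ] W => ⟪w, T w⟫_ℝ) hμ'
    simp only [map_sub, map_mul, map_smul, LinearMap.sub_apply, Module.End.mul_apply,
      LinearMap.smul_apply, inner_sub_right, inner_smul_right, ← hσp w _, ← hb' _ _,
      real_inner_self_eq_norm_sq, LinearMap.zero_apply, inner_zero_right] at this
    linarith
  have hv' : ‖ρ p v‖ ≠ 0 := norm_ne_zero_iff.2 hv
  have hw' : ‖σ p w‖ ≠ 0 := norm_ne_zero_iff.2 hw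
  rw [← sq_eq_sq₀ (norm_nonneg _) (norm_nonneg _), map_smul, map_smul, norm_smul, norm_smul,
    mul_pow, mul_pow, h1, h2]
  simp only [norm_inv, norm_norm]
  field_simp

/-- Two finite-dimensional orthogonal representations with common adjoints and equal characters
are related by an isometric intertwiner. The natural number is the dimension, on which the proof
proceeds by strong induction. -/
theorem exists_isometric_intertwiner (k : ℕ) :
    ∀ (V W : Type) [NormedAddCommGroup V] [InnerProductSpace ℝ V] [FiniteDimensional ℝ V]
      [NormedAddCommGroup W] [InnerProductSpace ℝ W] [FiniteDimensional ℝ W]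
      (ρ : R →ₐ[ℝ] Module.End ℝ V) (σ : R →ₐ[ℝ] Module.End ℝ W),
      Module.finrank ℝ V = k →
      (∀ a, ∃ b, AdjointPair ρ a b ∧ AdjointPair σ a b) →
      (∀ a, LinearMap.trace ℝ V (ρ a) = LinearMap.trace ℝ W (σ a)) →
      ∃ T : V →ₗ[ℝ] W, (∀ x, ‖T x‖ = ‖x‖) ∧ ∀ a x, T (ρ a x) = σ a (T x) := by
  induction k using Nat.strong_induction_on with
  | _ k ih =>
  intro V W _ _ _ _ _ _ ρ σ hk hadj htr
  rcases subsingleton_or_nontrivial V with hV | hV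
  · exact ⟨0, fun x => by simp [Subsingleton.elim x 0], fun a x => by simp⟩
  obtain ⟨v, w, hv, hvw⟩ := exists_matching_vectors hadj htr
  let F : R →ₗ[ℝ] V := LinearMap.applyₗ v ∘ₗ ρ.toLinearMap
  let G : R →ₗ[ℝ] W := LinearMap.applyₗ w ∘ₗ σ.toLinearMap
  have hFG : ∀ a, ‖F a‖ = ‖G a‖ := hvw
  let U := LinearMap.range F
  let U' := LinearMap.range G
  obtain ⟨e, he⟩ : ∃ e : U ≃ₗ[ℝ] U', ∀ a, e (F.rangeRestrict a) = G.rangeRestrict a :=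
    exists_linearEquiv_range hFG
  have hU : ∀ a, ∀ x ∈ U, ρ a x ∈ U := by
    rintro a _ ⟨b, rfl⟩
    exact ⟨a * b, by simp [F]⟩
  have hU' : ∀ a, ∀ x ∈ U', σ a x ∈ U' := by
    rintro a _ ⟨b, rfl⟩
    exact ⟨a * b, by simp [G]⟩
  have hUo := orthogonal_invariant (fun a => (hadj a).imp fun b h => h.1) hU
  have hUo' := orthogonal_invariant (fun a => (hadj a).imp fun b h => h.2) hU'
  have he_norm : ∀ x : U, ‖(e x : W)‖ = ‖(x : V)‖ := by
    intro x
    obtain ⟨b, rfl⟩ := F.surjective_rangeRestrict x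
    rw [he]
    exact (hFG b).symm
  have he_comm : ∀ a (x : U), e (subrep ρ U hU a x) = subrep σ U' hU' a (e x) := by
    intro a x
    obtain ⟨b, rfl⟩ := F.surjective_rangeRestrict x
    have h1 : subrep ρ U hU a (F.rangeRestrict b) = F.rangeRestrict (a * b) :=
      Subtype.ext (by simp [coe_subrep_apply, F])
    rw [h1, he, he]
    exact Subtype.ext (by simp [coe_subrep_apply, G])
  have htrU : ∀ a, LinearMap.trace ℝ U (subrep ρ U hU a) =
      LinearMap.trace ℝ U' (subrep σ U' hU' a) := by
    intro a
    rw [← LinearMap.trace_conj' _ e]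
    congr 1
    ext y
    obtain ⟨x, rfl⟩ := e.surjective y
    simp [LinearEquiv.conj_apply, he_comm]
  have hlt : Module.finrank ℝ Uᗮ < k := by
    have hpos : 0 < Module.finrank ℝ U := by
      have : Nontrivial U := ⟨⟨⟨v, 1, by simp [F]⟩, 0, fun h => hv (congrArg Subtype.val h)⟩⟩
      exact Module.finrank_pos
    have := U.finrank_add_finrank_orthogonal
    omega
  obtain ⟨T, hT, hTc⟩ := ih _ hlt Uᗮ U'ᗮ (subrep ρ Uᗮ hUo) (subrep σ U'ᗮ hUo') rfl
    (fun a => (hadj a).imp fun b h => ⟨fun x y => h.1 x y, fun x y => h.2 x y⟩)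
    (fun a => by
      have h1 := trace_subrep_add ρ U hU hUo a
      have h2 := trace_subrep_add σ U' hU' hUo' a
      have h3 := htrU a
      have h4 := htr a
      linarith)
  let d := Submodule.prodEquivOfIsCompl U Uᗮ U.isCompl_orthogonal
  let S : V →ₗ[ℝ] W := (LinearMap.coprod (U'.subtype ∘ₗ e.toLinearMap) (U'ᗮ.subtype ∘ₗ T)) ∘ₗ
    d.symm.toLinearMap
  have hS : ∀ (x : U) (y : Uᗮ), S ((x : V) + y) = (e x : W) + T y := by
    intro x y
    have : d.symm ((x : V) + y) = (x, y) := by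
      rw [LinearEquiv.symm_apply_eq]; simp [d]
    simp [S, this]
  have hdec : ∀ z : V, ∃ (x : U) (y : Uᗮ), z = (x : V) + y := fun z =>
    ⟨(d.symm z).1, (d.symm z).2, by
      conv_lhs => rw [← d.apply_symm_apply z]
      simp [d]⟩
  refine ⟨S, fun z => ?_, fun a z => ?_⟩
  · obtain ⟨x, y, rfl⟩ := hdec z
    rw [hS, ← sq_eq_sq₀ (norm_nonneg _) (norm_nonneg _), sq, sq,
      norm_add_sq_eq_norm_sq_add_norm_sq_real
        (Submodule.inner_right_of_mem_orthogonal (e x).2 (T y).2),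
      norm_add_sq_eq_norm_sq_add_norm_sq_real (Submodule.inner_right_of_mem_orthogonal x.2 y.2),
      he_norm]
    have := hT y
    simp only [Submodule.coe_norm] at this
    rw [this]
  · obtain ⟨x, y, rfl⟩ := hdec z
    rw [hS, map_add (ρ a), map_add (σ a), ← coe_subrep_apply ρ U hU, ← coe_subrep_apply ρ Uᗮ hUo, hS,
      he_comm, hTc]
    rfl

end Intertwiner

/-- Equality of traces extends from words to the whole free algebra, which words span. The empty
word contributes `n` on both sides. -/
theorem trace_lift_eq {n : ℕ} {A B : Matrix (Fin n) (Fin n) ℝ}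
    (h : ∀ w : List (Fin 2), w ≠ [] →
        ((w.map ![A, Aᵀ]).prod).trace = ((w.map ![B, Bᵀ]).prod).trace)
    (a : FreeAlgebra ℝ (Fin 2)) :
    (FreeAlgebra.lift ℝ ![A, Aᵀ] a).trace = (FreeAlgebra.lift ℝ ![B, Bᵀ] a).trace := by
  have ha : a ∈ Submodule.span ℝ
      (Submonoid.closure (Set.range (FreeAlgebra.ι ℝ : Fin 2 → _)) : Set (FreeAlgebra ℝ (Fin 2))) := by
    rw [← Algebra.adjoin_eq_span, FreeAlgebra.adjoin_range_ι]
    trivial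
  induction ha using Submodule.span_induction with
  | zero => simp
  | add x y _ _ hx hy => simp [hx, hy]
  | smul c x _ hx => simp [hx]
  | mem x hx =>
    obtain ⟨l, hl, rfl⟩ := Submonoid.exists_list_of_mem_closure hx
    obtain ⟨w, rfl⟩ : ∃ w : List (Fin 2), w.map (FreeAlgebra.ι ℝ) = l := by
      rw [← Set.mem_range, Set.range_list_map]
      exact hl
    rcases eq_or_ne w [] with rfl | hw
    · simp
    · simpa [map_list_prod, Function.comp_def] using h w hw

/-- A formal adjoint, obtained by reversing words and exchanging the letters, that works for all
`A` simultaneously. -/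
theorem exists_formal_adjoint {n : ℕ} (a : FreeAlgebra ℝ (Fin 2)) :
    ∃ b, ∀ A : Matrix (Fin n) (Fin n) ℝ,
      (FreeAlgebra.lift ℝ ![A, Aᵀ] a)ᵀ = FreeAlgebra.lift ℝ ![A, Aᵀ] b := by
  induction a using FreeAlgebra.induction with
  | grade0 r => exact ⟨algebraMap _ _ r, fun A => by simp [Matrix.algebraMap_eq_diagonal]⟩
  | grade1 i =>
    refine ⟨FreeAlgebra.ι ℝ (1 - i), fun A => ?_⟩
    fin_cases i <;> simp
  | mul a b ha hb =>
    obtain ⟨a', ha⟩ := ha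
    obtain ⟨b', hb⟩ := hb
    exact ⟨b' * a', fun A => by simp [ha, hb]⟩
  | add a b ha hb =>
    obtain ⟨a', ha⟩ := ha
    obtain ⟨b', hb⟩ := hb
    exact ⟨a' + b', fun A => by simp [ha, hb]⟩

/-- The representation of the free algebra on Euclidean space sending the two letters to `A` and
`Aᵀ`. -/
noncomputable def euclideanRep {n : ℕ} (A : Matrix (Fin n) (Fin n) ℝ) :
    FreeAlgebra ℝ (Fin 2) →ₐ[ℝ] Module.End ℝ (EuclideanSpace ℝ (Fin n)) :=
  (Matrix.toLpLinAlgEquiv 2).toAlgHom.comp (FreeAlgebra.lift ℝ ![A, Aᵀ])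

theorem euclideanRep_apply {n : ℕ} (A : Matrix (Fin n) (Fin n) ℝ) (a : FreeAlgebra ℝ (Fin 2)) :
    euclideanRep A a = Matrix.toEuclideanLin (FreeAlgebra.lift ℝ ![A, Aᵀ] a) := rfl

theorem conj_list_prod {n : ℕ} {A O : Matrix (Fin n) (Fin n) ℝ} (hO : O * Oᵀ = 1)
    (w : List (Fin 2)) :
    (w.map ![Oᵀ * A * O, (Oᵀ * A * O)ᵀ]).prod = Oᵀ * (w.map ![A, Aᵀ]).prod * O := by
  induction w with
  | nil => simpa using (mul_eq_one_comm.1 hO).symm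
  | cons i w ih =>
    have hi : ![Oᵀ * A * O, (Oᵀ * A * O)ᵀ] i = Oᵀ * ![A, Aᵀ] i * O := by
      fin_cases i <;> simp [Matrix.mul_assoc]
    rw [List.map_cons, List.prod_cons, ih, hi, List.map_cons, List.prod_cons]
    calc _ = Oᵀ * ![A, Aᵀ] i * (O * Oᵀ) * (w.map ![A, Aᵀ]).prod * O := by
          simp only [Matrix.mul_assoc]
      _ = _ := by rw [hO]; simp only [Matrix.mul_assoc, Matrix.mul_one]

/-- Specht's criterion (real version): real `n×n` matrices `A` and `B` are
orthogonally similar iff `Tr(w(A,Aᵗ)) = Tr(w(B,Bᵗ))` for every word `w` in two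
noncommuting variables. -/
theorem specht_criterion_real
    (n : ℕ) (A B : Matrix (Fin n) (Fin n) ℝ) :
    (∃ O : Matrix (Fin n) (Fin n) ℝ, O * Oᵀ = 1 ∧ B = Oᵀ * A * O) ↔
    (∀ w : List (Fin 2), w ≠ [] →
        ((w.map ![A, Aᵀ]).prod).trace = ((w.map ![B, Bᵀ]).prod).trace) := by
  constructor
  · rintro ⟨O, hO, rfl⟩ w -
    rw [conj_list_prod hO, Matrix.trace_mul_cycle, hO, Matrix.one_mul]
  · intro h
    have hinner : ∀ (M : Matrix (Fin n) (Fin n) ℝ) (x y : EuclideanSpace ℝ (Fin n)),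
        ⟪Matrix.toEuclideanLin M x, y⟫_ℝ = ⟪x, Matrix.toEuclideanLin Mᵀ y⟫_ℝ := fun M x y => by
      rw [← Matrix.conjTranspose_eq_transpose_of_trivial,
        Matrix.toEuclideanLin_conjTranspose_eq_adjoint, LinearMap.adjoint_inner_right]
    obtain ⟨T, hT, hTc⟩ := exists_isometric_intertwiner n _ _ (euclideanRep A) (euclideanRep B)
      (by simp)
      (fun a => by
        obtain ⟨b, hb⟩ := exists_formal_adjoint (n := n) a
        refine ⟨b, fun x y => ?_, fun x y => ?_⟩ <;>
        rw [euclideanRep_apply, euclideanRep_apply, hinner, hb])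
      (fun a => by
        simp only [euclideanRep_apply, Matrix.toLpLin_eq_toLin, Matrix.trace_toLin_eq]
        exact trace_lift_eq h a)
    obtain ⟨M, rfl⟩ := Matrix.toEuclideanLin.surjective T
    have hM : Mᵀ * M = 1 := by
      apply Matrix.toEuclideanLin.injective
      refine LinearMap.ext fun x => ext_inner_left ℝ fun y => ?_
      have := (LinearMap.norm_map_iff_inner_map_map (Matrix.toEuclideanLin M)).1 hT y x
      rw [Matrix.toLpLin_mul_same, LinearMap.comp_apply, ← hinner, this, Matrix.toLpLin_one]
      rfl
    have hMA : M * A = B * M := by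
      apply Matrix.toEuclideanLin.injective
      refine LinearMap.ext fun x => ?_
      have := hTc (FreeAlgebra.ι ℝ 0) x
      simp only [euclideanRep_apply, FreeAlgebra.lift_ι_apply] at this
      rw [Matrix.toLpLin_mul_same, Matrix.toLpLin_mul_same]
      exact this
    refine ⟨Mᵀ, by rwa [Matrix.transpose_transpose], ?_⟩
    rw [Matrix.transpose_transpose, hMA, Matrix.mul_assoc, mul_eq_one_comm.1 hM,
      Matrix.mul_one]
end
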